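/- arXiv:1512.00715 — 14 statements merged into one kernel-verified Lean document; each statement's English description precedes it below -/
import Mathlib

section
/- Let q, r, ξ₀ be real numbers with q ≠ 0 and r² − 4q > 0, and set s = √(r² − 4q). Then on any open interval of ξ where −(s·tanh(s(ξ+ξ₀)/2) + r)/(2q) > 0, the function Φ(ξ) = ln(−(s·tanh(s(ξ+ξ₀)/2) + r)/(2q)) is differentiable and satisfies the auxiliary ODE Φ'(ξ) = exp(−Φ(ξ)) + q·exp(Φ(ξ)) + r. -/
/-- Type 1 solution (9a) of the auxiliary ODE Φ' = exp(-Φ) + q·exp(Φ) + r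
with p = 1, q ≠ 0 and r² - 4q > 0. -/
theorem stmt_0 (q r ξ₀ : ℝ) (hq : q ≠ 0) (hdisc : r ^ 2 - 4 * q > 0)
    (s : ℝ) (hs : s = Real.sqrt (r ^ 2 - 4 * q)) (a b : ℝ)
    (hpos : ∀ ξ ∈ Set.Ioo a b,
      -(s * Real.tanh (s * (ξ + ξ₀) / 2) + r) / (2 * q) > 0) :
    ∀ ξ ∈ Set.Ioo a b,
      HasDerivAt (fun ξ' => Real.log (-(s * Real.tanh (s * (ξ' + ξ₀) / 2) + r) / (2 * q)))
        (Real.exp (-Real.log (-(s * Real.tanh (s * (ξ + ξ₀) / 2) + r) / (2 * q)))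
          + q * Real.exp (Real.log (-(s * Real.tanh (s * (ξ + ξ₀) / 2) + r) / (2 * q)))
          + r) ξ := by
  intro ξ hξ
  have hu := hpos ξ hξ
  have hs2 : s ^ 2 = r ^ 2 - 4 * q := by
    rw [hs, Real.sq_sqrt hdisc.le]
  have hT : ∀ x : ℝ, HasDerivAt Real.tanh (1 - Real.tanh x ^ 2) x := by
    intro x
    have hc : Real.cosh x ≠ 0 := (Real.cosh_pos x).ne'
    have h := (Real.hasDerivAt_sinh x).div (Real.hasDerivAt_cosh x) hc
    have he : Real.tanh = Real.sinh / Real.cosh := by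
      funext y
      simp [Real.tanh_eq_sinh_div_cosh]
    rw [he]
    refine h.congr_deriv ?_
    simp only [Pi.div_apply]
    field_simp
  have hl : HasDerivAt (fun y : ℝ => s * (y + ξ₀) / 2) (s / 2) ξ := by
    have h := (((hasDerivAt_id ξ).add_const ξ₀).const_mul s).div_const 2
    simpa using h
  have hc := (hT (s * (ξ + ξ₀) / 2)).comp ξ hl
  have hf := ((((hc.const_mul s).add_const r).neg).div_const (2 * q)).log hu.ne'
  rw [Real.exp_neg, Real.exp_log hu]
  refine hf.congr_deriv ?_
  change _ / (-(s * Real.tanh (s * (ξ + ξ₀) / 2) + r) / (2 * q)) = _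
  generalize Real.tanh (s * (ξ + ξ₀) / 2) = T at hu ⊢
  obtain ⟨u, hu'⟩ : ∃ u, u = -(s * T + r) / (2 * q) := ⟨_, rfl⟩
  rw [← hu'] at hu ⊢
  have h1 : s * T = -2 * q * u - r := by
    rw [hu']
    field_simp
    ring
  have h2 : s ^ 2 * T ^ 2 = (-2 * q * u - r) ^ 2 := by
    rw [← h1]
    ring
  have hune := hu.ne'
  field_simp
  linear_combination (-1) * hs2 + h2
end

section
/- Let q, r, ξ₀ be real numbers with q ≠ 0 and r² − 4q < 0, and set s = √(4q − r²). Then on any open interval of ξ where cos(s(ξ+ξ₀)/2) ≠ 0 and (s·tan(s(ξ+ξ₀)/2) − r)/(2q) > 0, the function Φ(ξ) = ln((s·tan(s(ξ+ξ₀)/2) − r)/(2q)) is differentiable and satisfies the auxiliary ODE Φ'(ξ) = exp(−Φ(ξ)) + q·exp(Φ(ξ)) + r. -/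
/-- Type 1 solution (9b) of the auxiliary ODE Φ' = exp(-Φ) + q·exp(Φ) + r
with p = 1, q ≠ 0 and r² - 4q < 0. -/
theorem stmt_1 (q r ξ₀ : ℝ) (hq : q ≠ 0) (hdisc : r ^ 2 - 4 * q < 0)
    (s : ℝ) (hs : s = Real.sqrt (4 * q - r ^ 2)) (a b : ℝ)
    (hcos : ∀ ξ ∈ Set.Ioo a b, Real.cos (s * (ξ + ξ₀) / 2) ≠ 0)
    (hpos : ∀ ξ ∈ Set.Ioo a b,
      (s * Real.tan (s * (ξ + ξ₀) / 2) - r) / (2 * q) > 0) :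
    ∀ ξ ∈ Set.Ioo a b,
      HasDerivAt (fun ξ' => Real.log ((s * Real.tan (s * (ξ' + ξ₀) / 2) - r) / (2 * q)))
        (Real.exp (-Real.log ((s * Real.tan (s * (ξ + ξ₀) / 2) - r) / (2 * q)))
          + q * Real.exp (Real.log ((s * Real.tan (s * (ξ + ξ₀) / 2) - r) / (2 * q)))
          + r) ξ := by
  intro ξ hξ
  have hc := hcos ξ hξ
  have hp := hpos ξ hξ
  have hs2 : s ^ 2 = 4 * q - r ^ 2 := by
    rw [hs]; exact Real.sq_sqrt (by linarith)
  have hlin : HasDerivAt (fun x : ℝ => s * (x + ξ₀) / 2) (s * 1 / 2) ξ :=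
    (((hasDerivAt_id' ξ).add_const ξ₀).const_mul s).div_const 2
  have htan := (Real.hasDerivAt_tan hc).comp ξ hlin
  have hu := ((htan.const_mul s).sub_const r).div_const (2 * q)
  have hl := hu.log hp.ne'
  have hsec : 1 / Real.cos (s * (ξ + ξ₀) / 2) ^ 2
      = 1 + Real.tan (s * (ξ + ξ₀) / 2) ^ 2 := by
    rw [← Real.inv_one_add_tan_sq hc]; simp
  rw [Real.exp_neg, Real.exp_log hp]
  refine hl.congr_deriv ?_
  simp only [Function.comp_apply]
  rw [hsec]
  generalize Real.tan (s * (ξ + ξ₀) / 2) = T at hp ⊢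
  rw [div_eq_iff hp.ne']
  generalize hU : (s * T - r) / (2 * q) = u at hp ⊢
  have hT : s * T = 2 * q * u + r := by
    rw [← hU]; field_simp; ring
  have hne : u ≠ 0 := hp.ne'
  field_simp
  linear_combination hs2 + (s * T + 2 * q * u + r) * hT
end

section
/- Let q, r, ξ₀ be real numbers with q ≠ 0, r ≠ 0 and r² − 4q = 0. Then on any open interval of ξ where r(ξ+ξ₀) ≠ 0, r(ξ+ξ₀) + 2 ≠ 0 and −2(r(ξ+ξ₀) + 2)/(r²(ξ+ξ₀)) > 0, the function Φ(ξ) = ln(−2(r(ξ+ξ₀) + 2)/(r²(ξ+ξ₀))) is differentiable and satisfies the auxiliary ODE Φ'(ξ) = exp(−Φ(ξ)) + q·exp(Φ(ξ)) + r. -/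
/-- Type 1 solution (9d) of the auxiliary ODE Φ' = exp(-Φ) + q·exp(Φ) + r
with p = 1, q ≠ 0, r ≠ 0 and r² - 4q = 0. -/
theorem stmt_3 (q r ξ₀ : ℝ) (hq : q ≠ 0) (hr : r ≠ 0) (hdisc : r ^ 2 - 4 * q = 0)
    (a b : ℝ)
    (h1 : ∀ ξ ∈ Set.Ioo a b, r * (ξ + ξ₀) ≠ 0)
    (h2 : ∀ ξ ∈ Set.Ioo a b, r * (ξ + ξ₀) + 2 ≠ 0)
    (hpos : ∀ ξ ∈ Set.Ioo a b,
      -(2 * (r * (ξ + ξ₀) + 2)) / (r ^ 2 * (ξ + ξ₀)) > 0) :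
    ∀ ξ ∈ Set.Ioo a b,
      HasDerivAt
        (fun ξ' => Real.log (-(2 * (r * (ξ' + ξ₀) + 2)) / (r ^ 2 * (ξ' + ξ₀))))
        (Real.exp (-Real.log (-(2 * (r * (ξ + ξ₀) + 2)) / (r ^ 2 * (ξ + ξ₀))))
          + q * Real.exp (Real.log (-(2 * (r * (ξ + ξ₀) + 2)) / (r ^ 2 * (ξ + ξ₀))))
          + r) ξ := by
  intro ξ hξ
  have hu := h1 ξ hξ
  have hv := h2 ξ hξ
  have hp := hpos ξ hξ
  have hs : ξ + ξ₀ ≠ 0 := right_ne_zero_of_mul hu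
  have hqe : q = r ^ 2 / 4 := by linarith
  have hd : r ^ 2 * (ξ + ξ₀) ≠ 0 := mul_ne_zero (pow_ne_zero 2 hr) hs
  have e : HasDerivAt (fun x : ℝ => x + ξ₀) 1 ξ := (hasDerivAt_id ξ).add_const ξ₀
  have en : HasDerivAt (fun x : ℝ => -(2 * (r * (x + ξ₀) + 2))) (-(2 * (r * 1))) ξ :=
    (((e.const_mul r).add_const 2).const_mul 2).neg
  have ed : HasDerivAt (fun x : ℝ => r ^ 2 * (x + ξ₀)) (r ^ 2 * 1) ξ := e.const_mul (r ^ 2)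
  have key := (en.fun_div ed hd).log hp.ne'
  rw [Real.exp_neg, Real.exp_log hp]
  refine key.congr_deriv ?_
  rw [hqe]
  clear key en ed e hp hd hu hpos h1 h2
  generalize ξ + ξ₀ = s at *
  field_simp
  ring
end

section
/- Let p > 0, q > 0 and ξ₀ be real numbers. Then on any open interval of ξ where sin(√(pq)(ξ+ξ₀)) ≠ 0 and −cot(√(pq)(ξ+ξ₀)) > 0, the function Φ(ξ) = ln(−√(p/q)·cot(√(pq)(ξ+ξ₀))) is differentiable and satisfies the auxiliary ODE Φ'(ξ) = p·exp(−Φ(ξ)) + q·exp(Φ(ξ)) (i.e. the case r = 0). -/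
/-- Type 2 solution (9f) of the auxiliary ODE Φ' = p·exp(-Φ) + q·exp(Φ)
with r = 0 and p > 0, q > 0, where cot θ = cos θ / sin θ. -/
theorem stmt_5 (p q ξ₀ : ℝ) (hp : p > 0) (hq : q > 0) (a b : ℝ)
    (hsin : ∀ ξ ∈ Set.Ioo a b, Real.sin (Real.sqrt (p * q) * (ξ + ξ₀)) ≠ 0)
    (hcot : ∀ ξ ∈ Set.Ioo a b,
      -(Real.cos (Real.sqrt (p * q) * (ξ + ξ₀)) / Real.sin (Real.sqrt (p * q) * (ξ + ξ₀))) > 0) :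
    ∀ ξ ∈ Set.Ioo a b,
      HasDerivAt
        (fun ξ' => Real.log (-(Real.sqrt (p / q) *
          (Real.cos (Real.sqrt (p * q) * (ξ' + ξ₀)) / Real.sin (Real.sqrt (p * q) * (ξ' + ξ₀))))))
        (p * Real.exp (-Real.log (-(Real.sqrt (p / q) *
            (Real.cos (Real.sqrt (p * q) * (ξ + ξ₀)) / Real.sin (Real.sqrt (p * q) * (ξ + ξ₀))))))
          + q * Real.exp (Real.log (-(Real.sqrt (p / q) *
            (Real.cos (Real.sqrt (p * q) * (ξ + ξ₀)) / Real.sin (Real.sqrt (p * q) * (ξ + ξ₀))))))) ξ := by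
  intro ξ hξ
  have hs := hsin ξ hξ
  have hc := hcot ξ hξ
  have hk : 0 < Real.sqrt (p / q) := Real.sqrt_pos.mpr (div_pos hp hq)
  have hkw : Real.sqrt (p / q) * Real.sqrt (p * q) = p := by
    rw [← Real.sqrt_mul (div_pos hp hq).le]
    have h : p / q * (p * q) = p ^ 2 := by field_simp
    rw [h, Real.sqrt_sq hp.le]
  have hkk : q * Real.sqrt (p / q) ^ 2 = p := by
    rw [Real.sq_sqrt (div_pos hp hq).le]
    field_simp
  generalize Real.sqrt (p / q) = k at *
  generalize Real.sqrt (p * q) = w at *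
  have hu : 0 < -(k * (Real.cos (w * (ξ + ξ₀)) / Real.sin (w * (ξ + ξ₀)))) := by
    rw [← mul_neg]
    exact mul_pos hk hc
  have hlin : HasDerivAt (fun x : ℝ => w * (x + ξ₀)) (w * 1) ξ :=
    ((hasDerivAt_id ξ).add_const ξ₀).const_mul w
  have hd := (((hlin.cos.div hlin.sin hs).const_mul k).neg).log hu.ne'
  refine hd.congr_deriv ?_
  rw [Real.exp_neg, Real.exp_log hu]
  have hcs := Real.sin_sq_add_cos_sq (w * (ξ + ξ₀))
  simp only [Pi.neg_apply, Pi.div_apply]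
  rw [div_eq_iff hu.ne', add_mul, mul_assoc p, inv_mul_cancel₀ hu.ne']
  generalize Real.sin (w * (ξ + ξ₀)) = S at *
  generalize Real.cos (w * (ξ + ξ₀)) = C at *
  have e1 : -(k * ((-S * (w * 1) * S - C * (C * (w * 1))) / S ^ 2)) = k * w * (S ^ 2 + C ^ 2) / S ^ 2 := by
    field_simp
    ring
  have e2 : q * -(k * (C / S)) * -(k * (C / S)) = q * k ^ 2 * C ^ 2 / S ^ 2 := by
    field_simp
  rw [e1, e2, hkw, hkk]
  field_simp
end

section
/- Let p > 0, q < 0 and ξ₀ be real numbers. Then for all ξ with ξ + ξ₀ > 0, the function Φ(ξ) = ln(√(−p/q)·tanh(√(−pq)(ξ+ξ₀))) is differentiable and satisfies the auxiliary ODE Φ'(ξ) = p·exp(−Φ(ξ)) + q·exp(Φ(ξ)) (i.e. the case r = 0 with pq < 0). -/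
/-- Type 2 solution (9g) of the auxiliary ODE Φ' = p·exp(-Φ) + q·exp(Φ)
with r = 0 and p > 0, q < 0 (so pq < 0). -/
theorem stmt_6 (p q ξ₀ : ℝ) (hp : p > 0) (hq : q < 0) :
    ∀ ξ : ℝ, ξ + ξ₀ > 0 →
      HasDerivAt
        (fun ξ' => Real.log (Real.sqrt (-p / q) * Real.tanh (Real.sqrt (-(p * q)) * (ξ' + ξ₀))))
        (p * Real.exp (-Real.log (Real.sqrt (-p / q) * Real.tanh (Real.sqrt (-(p * q)) * (ξ + ξ₀))))
          + q * Real.exp (Real.log (Real.sqrt (-p / q) * Real.tanh (Real.sqrt (-(p * q)) * (ξ + ξ₀))))) ξ := by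
  intro ξ hξ
  have hm : 0 < -q := by linarith
  have hpq : 0 < -(p * q) := by nlinarith [mul_pos hp hm]
  have ha : Real.sqrt (-p / q) = Real.sqrt (-(p * q)) / (-q) := by
    have h : -p / q = -(p * q) / (-q) ^ 2 := by
      field_simp
    rw [h, Real.sqrt_div hpq.le, Real.sqrt_sq hm.le]
  rw [ha]
  have hb : 0 < Real.sqrt (-(p * q)) := Real.sqrt_pos.mpr hpq
  have hb2 : Real.sqrt (-(p * q)) ^ 2 = -(p * q) := Real.sq_sqrt hpq.le
  generalize Real.sqrt (-(p * q)) = b at hb hb2 ⊢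
  have hs : 0 < Real.sinh (b * (ξ + ξ₀)) := Real.sinh_pos_iff.mpr (mul_pos hb hξ)
  have hc : 0 < Real.cosh (b * (ξ + ξ₀)) := Real.cosh_pos _
  have hlin : HasDerivAt (fun x : ℝ => b * (x + ξ₀)) b ξ := by
    simpa using ((hasDerivAt_id ξ).add_const ξ₀).const_mul b
  simp only [Real.tanh_eq_sinh_div_cosh]
  have hpos : 0 < b / (-q) * (Real.sinh (b * (ξ + ξ₀)) / Real.cosh (b * (ξ + ξ₀))) := by
    positivity
  have key := (((hlin.sinh.div hlin.cosh hc.ne').const_mul (b / (-q))).log hpos.ne')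
  rw [Real.exp_neg, Real.exp_log hpos]
  refine HasDerivAt.congr_deriv key ?_
  clear key
  have hq0 : q ≠ 0 := hq.ne
  have hp' : p = b ^ 2 / (-q) := by
    rw [hb2, eq_div_iff hm.ne']; ring
  rw [hp']
  simp only [Pi.div_apply]
  generalize Real.sinh (b * (ξ + ξ₀)) = s at *
  generalize Real.cosh (b * (ξ + ξ₀)) = c at *
  field_simp
  try ring
end

section
/- Let p > 0, q < 0 and ξ₀ be real numbers. Then for all ξ with ξ + ξ₀ > 0, the function Φ(ξ) = ln(√(−p/q)·coth(√(−pq)(ξ+ξ₀))) is differentiable and satisfies the auxiliary ODE Φ'(ξ) = p·exp(−Φ(ξ)) + q·exp(Φ(ξ)) (i.e. the case r = 0 with pq < 0). -/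
/-- Type 2 solution (9h) of the auxiliary ODE Φ' = p·exp(-Φ) + q·exp(Φ)
with r = 0 and p > 0, q < 0, where coth θ = cosh θ / sinh θ. -/
theorem stmt_7 (p q ξ₀ : ℝ) (hp : p > 0) (hq : q < 0) :
    ∀ ξ : ℝ, ξ + ξ₀ > 0 →
      HasDerivAt
        (fun ξ' => Real.log (Real.sqrt (-p / q) *
          (Real.cosh (Real.sqrt (-(p * q)) * (ξ' + ξ₀)) / Real.sinh (Real.sqrt (-(p * q)) * (ξ' + ξ₀)))))
        (p * Real.exp (-Real.log (Real.sqrt (-p / q) *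
            (Real.cosh (Real.sqrt (-(p * q)) * (ξ + ξ₀)) / Real.sinh (Real.sqrt (-(p * q)) * (ξ + ξ₀)))))
          + q * Real.exp (Real.log (Real.sqrt (-p / q) *
            (Real.cosh (Real.sqrt (-(p * q)) * (ξ + ξ₀)) / Real.sinh (Real.sqrt (-(p * q)) * (ξ + ξ₀)))))) ξ := by
  intro ξ hξ
  have hq0 : q ≠ 0 := hq.ne
  have ha : 0 < Real.sqrt (-p / q) :=
    Real.sqrt_pos.mpr (div_pos_of_neg_of_neg (by linarith) hq)
  have hb : 0 < Real.sqrt (-(p * q)) := Real.sqrt_pos.mpr (by nlinarith)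
  have ha2 : Real.sqrt (-p / q) ^ 2 = -p / q :=
    Real.sq_sqrt (div_pos_of_neg_of_neg (by linarith) hq).le
  have hb2 : Real.sqrt (-(p * q)) ^ 2 = -(p * q) := Real.sq_sqrt (by nlinarith)
  generalize Real.sqrt (-p / q) = a at *
  generalize Real.sqrt (-(p * q)) = b at *
  have hqa : q * a ^ 2 = -p := by
    rw [ha2]; field_simp
  have hab : a * b = p := by
    have h : (a * b) ^ 2 = p ^ 2 := by
      rw [mul_pow, ha2, hb2]; field_simp
    exact (pow_left_inj₀ (by positivity) hp.le (by norm_num)).mp h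
  have hS : 0 < Real.sinh (b * (ξ + ξ₀)) := Real.sinh_pos_iff.mpr (mul_pos hb hξ)
  have hC : 0 < Real.cosh (b * (ξ + ξ₀)) := Real.cosh_pos _
  have hy : 0 < a * (Real.cosh (b * (ξ + ξ₀)) / Real.sinh (b * (ξ + ξ₀))) := by positivity
  have hl : HasDerivAt (fun x => b * (x + ξ₀)) b ξ := by
    simpa using ((hasDerivAt_id ξ).add_const ξ₀).const_mul b
  have hd := (((hl.cosh).div (hl.sinh) hS.ne').const_mul a).log hy.ne'
  refine hd.congr_deriv ?_
  rw [Real.exp_neg, Real.exp_log hy]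
  have hcs := Real.cosh_sq (b * (ξ + ξ₀))
  simp only [Pi.div_apply]
  generalize Real.cosh (b * (ξ + ξ₀)) = C at *
  generalize Real.sinh (b * (ξ + ξ₀)) = S at *
  have hq' : q = -b / a := by
    field_simp
    have : a * (q * a + b) = 0 := by linear_combination hqa + hab
    rcases mul_eq_zero.mp this with h | h
    · exact absurd h ha.ne'
    · linarith
  rw [hq', ← hab]
  field_simp
  try ring
end

section
/- Let p, q, r, k, A be real numbers with r² − 4pq ≥ 0 and set s = √(r² − 4pq). Suppose Φ is a differentiable real-valued function on an open interval I satisfying the auxiliary ODE Φ'(ξ) = p·exp(−Φ(ξ)) + q·exp(Φ(ξ)) + r for all ξ ∈ I. Define w(ξ) = A·k·(r + s)/2 + p·A·k·exp(−Φ(ξ)) and c = −A·k²·s. Then c·w(ξ) + k·w(ξ)² + A·k²·w'(ξ) = 0 for all ξ ∈ I. -/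
/-- The ansatz w = A·k·(r+s)/2 + p·A·k·exp(-Φ) with wave speed c = -A·k²·s
solves the once-integrated traveling-wave Burgers equation
c·w + k·w² + A·k²·w' = 0, provided Φ solves the auxiliary ODE. -/
theorem stmt_9 (p q r k A : ℝ) (hdisc : r ^ 2 - 4 * p * q ≥ 0)
    (s : ℝ) (hs : s = Real.sqrt (r ^ 2 - 4 * p * q))
    (a b : ℝ) (Φ : ℝ → ℝ)
    (hΦ : ∀ ξ ∈ Set.Ioo a b,
      HasDerivAt Φ (p * Real.exp (-Φ ξ) + q * Real.exp (Φ ξ) + r) ξ)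
    (w : ℝ → ℝ)
    (hw : w = fun ξ => A * k * (r + s) / 2 + p * A * k * Real.exp (-Φ ξ))
    (c : ℝ) (hc : c = -(A * k ^ 2 * s)) :
    ∀ ξ ∈ Set.Ioo a b, c * w ξ + k * w ξ ^ 2 + A * k ^ 2 * deriv w ξ = 0 := by
  intro ξ hξ
  have hd : HasDerivAt w (p * A * k * (Real.exp (-Φ ξ) *
      -(p * Real.exp (-Φ ξ) + q * Real.exp (Φ ξ) + r))) ξ := by
    rw [hw]
    exact (((hΦ ξ hξ).neg.exp).const_mul (p * A * k)).const_add (A * k * (r + s) / 2)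
  have hs2 : s ^ 2 = r ^ 2 - 4 * p * q := by
    rw [hs]
    exact Real.sq_sqrt hdisc
  have hE : Real.exp (-Φ ξ) * Real.exp (Φ ξ) = 1 := by
    rw [← Real.exp_add]
    simp
  rw [hd.deriv, hc, hw]
  linear_combination (-(A ^ 2 * k ^ 3 / 4)) * hs2 - A ^ 2 * k ^ 3 * p * q * hE
end

section
/- Let p, q, r, k be real numbers. Suppose Φ is a differentiable real-valued function on an open interval I satisfying the auxiliary ODE Φ'(ξ) = p·exp(−Φ(ξ)) + q·exp(Φ(ξ)) + r for all ξ ∈ I. Define V(ξ) = (k/2)·r + k·p·exp(−Φ(ξ)) and c = −k³·p·q + (1/4)·k³·r². Then V is twice differentiable on I and −c·V'(ξ) + (1/2)·k²·V(ξ)·V''(ξ) + 2k·V(ξ)²·V'(ξ) + k²·V'(ξ)² = 0 for all ξ ∈ I. -/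
/-- The ansatz V = (k/2)·r + k·p·exp(-Φ) with wave speed c = -k³pq + (1/4)k³r²
solves the traveling-wave foam drainage equation
-c·V' + (1/2)k²·V·V'' + 2k·V²·V' + k²·(V')² = 0, provided Φ solves the auxiliary ODE. -/
theorem stmt_10 (p q r k a b : ℝ) (Φ : ℝ → ℝ)
    (hΦ : ∀ ξ ∈ Set.Ioo a b,
      HasDerivAt Φ (p * Real.exp (-Φ ξ) + q * Real.exp (Φ ξ) + r) ξ)
    (V : ℝ → ℝ) (hV : V = fun ξ => k / 2 * r + k * p * Real.exp (-Φ ξ))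
    (c : ℝ) (hc : c = -(k ^ 3 * p * q) + 1 / 4 * k ^ 3 * r ^ 2) :
    ∀ ξ ∈ Set.Ioo a b,
      DifferentiableAt ℝ V ξ ∧ DifferentiableAt ℝ (deriv V) ξ ∧
      -c * deriv V ξ + 1 / 2 * k ^ 2 * V ξ * deriv (deriv V) ξ
        + 2 * k * V ξ ^ 2 * deriv V ξ + k ^ 2 * deriv V ξ ^ 2 = 0 := by
  have hE : ∀ ξ ∈ Set.Ioo a b, HasDerivAt (fun x => Real.exp (-Φ x))
      (-(p * Real.exp (-Φ ξ) ^ 2 + q + r * Real.exp (-Φ ξ))) ξ := by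
    intro ξ hξ
    have h := (hΦ ξ hξ).neg.exp
    have e : Real.exp (-Φ ξ) * Real.exp (Φ ξ) = 1 := by
      rw [← Real.exp_add]; simp
    refine h.congr_deriv ?_
    simp only [Pi.neg_apply]
    linear_combination (-q) * e
  have hV1 : ∀ ξ ∈ Set.Ioo a b, HasDerivAt V
      (k * p * -(p * Real.exp (-Φ ξ) ^ 2 + q + r * Real.exp (-Φ ξ))) ξ := by
    intro ξ hξ
    rw [hV]
    exact ((hE ξ hξ).const_mul (k * p)).const_add (k / 2 * r)
  intro ξ hξ
  have hev : deriv V =ᶠ[nhds ξ] fun x =>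
      k * p * -(p * Real.exp (-Φ x) ^ 2 + q + r * Real.exp (-Φ x)) := by
    filter_upwards [isOpen_Ioo.mem_nhds hξ] with x hx
    exact (hV1 x hx).deriv
  have hV2 := ((((((hE ξ hξ).pow 2).const_mul p).add_const q).add
    ((hE ξ hξ).const_mul r)).neg.const_mul (k * p)).congr_of_eventuallyEq hev
  refine ⟨(hV1 ξ hξ).differentiableAt, hV2.differentiableAt, ?_⟩
  rw [hV2.deriv, (hV1 ξ hξ).deriv, hV, hc]
  norm_num
  ring
end

section
/- Let p, q, r, L, M, B₀ be real numbers with M ≠ 1 and L·M ≠ 1. Suppose Φ is a differentiable real-valued function on an open interval I satisfying the auxiliary ODE Φ'(ξ) = p·exp(−Φ(ξ)) + q·exp(Φ(ξ)) + r for all ξ ∈ I. Define c = −(2LMB₀ − r + Mr − 2B₀)/(M − 1), A₀ = (L − 1)B₀/(M − 1), A₁ = −p(L − 1)/(LM − 1), B₁ = −p(M − 1)/(LM − 1), and set u(ξ) = A₀ + A₁·exp(−Φ(ξ)), v(ξ) = B₀ + B₁·exp(−Φ(ξ)). Then u and v are twice differentiable on I and satisfy c·u' − u'' + 2u·u' +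 L·(u·v)' = 0 and c·v' − v'' + 2v·v' + M·(u·v)' = 0 on I. -/
/-- The ansatz u = A₀ + A₁·exp(-Φ), v = B₀ + B₁·exp(-Φ) with the stated
constants solves the traveling-wave coupled Burgers system
c·u' - u'' + 2u·u' + L·(uv)' = 0, c·v' - v'' + 2v·v' + M·(uv)' = 0,
provided Φ solves the auxiliary ODE. -/
theorem stmt_11 (p q r L M B₀ : ℝ) (hM : M ≠ 1) (hLM : L * M ≠ 1)
    (a b : ℝ) (Φ : ℝ → ℝ)
    (hΦ : ∀ ξ ∈ Set.Ioo a b,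
      HasDerivAt Φ (p * Real.exp (-Φ ξ) + q * Real.exp (Φ ξ) + r) ξ)
    (c A₀ A₁ B₁ : ℝ)
    (hc : c = -(2 * L * M * B₀ - r + M * r - 2 * B₀) / (M - 1))
    (hA₀ : A₀ = (L - 1) * B₀ / (M - 1))
    (hA₁ : A₁ = -(p * (L - 1)) / (L * M - 1))
    (hB₁ : B₁ = -(p * (M - 1)) / (L * M - 1))
    (u v : ℝ → ℝ)
    (hu : u = fun ξ => A₀ + A₁ * Real.exp (-Φ ξ))
    (hv : v = fun ξ => B₀ + B₁ * Real.exp (-Φ ξ)) :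
    ∀ ξ ∈ Set.Ioo a b,
      (DifferentiableAt ℝ u ξ ∧ DifferentiableAt ℝ (deriv u) ξ ∧
       DifferentiableAt ℝ v ξ ∧ DifferentiableAt ℝ (deriv v) ξ) ∧
      c * deriv u ξ - deriv (deriv u) ξ + 2 * u ξ * deriv u ξ
        + L * deriv (fun ξ' => u ξ' * v ξ') ξ = 0 ∧
      c * deriv v ξ - deriv (deriv v) ξ + 2 * v ξ * deriv v ξ
        + M * deriv (fun ξ' => u ξ' * v ξ') ξ = 0 := by
  have hM' : M - 1 ≠ 0 := sub_ne_zero.mpr hM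
  have hLM' : L * M - 1 ≠ 0 := sub_ne_zero.mpr hLM
  -- algebraic relations between the coefficients
  have k1 : A₁ + L * B₁ = -p := by rw [hA₁, hB₁]; field_simp; ring
  have k2 : B₁ + M * A₁ = -p := by
    have e1 : A₁ * (L * M - 1) = -(p * (L - 1)) := by rw [hA₁]; exact div_mul_cancel₀ _ hLM'
    have e2 : B₁ * (L * M - 1) = -(p * (M - 1)) := by rw [hB₁]; exact div_mul_cancel₀ _ hLM'
    apply mul_right_cancel₀ hLM'
    linear_combination e2 + M * e1
  have k3 : A₀ * B₁ = A₁ * B₀ := by rw [hA₀, hA₁, hB₁]; field_simp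
  have k4 : c + r + 2 * A₀ + 2 * L * B₀ = 0 := by rw [hc, hA₀]; field_simp; ring
  have k5 : c + r + 2 * B₀ + 2 * M * A₀ = 0 := by rw [hc, hA₀]; field_simp; ring
  -- derivative of `exp (-Φ)`
  have hE : ∀ ξ ∈ Set.Ioo a b, HasDerivAt (fun x => Real.exp (-Φ x))
      (-(p * Real.exp (-Φ ξ) ^ 2 + r * Real.exp (-Φ ξ) + q)) ξ := by
    intro ξ hξ
    have h := (hΦ ξ hξ).neg.exp
    have e : Real.exp (-Φ ξ) * Real.exp (Φ ξ) = 1 := by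
      rw [← Real.exp_add]; simp
    refine h.congr_deriv ?_
    simp only [Pi.neg_apply]
    linear_combination (-q) * e
  have hE2 : ∀ ξ ∈ Set.Ioo a b, HasDerivAt
      (fun x => -(p * Real.exp (-Φ x) ^ 2 + r * Real.exp (-Φ x) + q))
      ((2 * p * Real.exp (-Φ ξ) + r) *
        (p * Real.exp (-Φ ξ) ^ 2 + r * Real.exp (-Φ ξ) + q)) ξ := by
    intro ξ hξ
    have h := hE ξ hξ
    refine (((((h.pow 2).const_mul p).add (h.const_mul r)).add_const q).neg).congr_deriv ?_
    simp only [Nat.cast_ofNat, Nat.add_one_sub_one, pow_one]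
    ring
  have key : ∀ C D : ℝ, ∀ ξ ∈ Set.Ioo a b,
      HasDerivAt (fun x => C + D * Real.exp (-Φ x))
        (D * -(p * Real.exp (-Φ ξ) ^ 2 + r * Real.exp (-Φ ξ) + q)) ξ :=
    fun C D ξ hξ => ((hE ξ hξ).const_mul D).const_add C
  have key2 : ∀ C D : ℝ, ∀ ξ ∈ Set.Ioo a b,
      HasDerivAt (deriv (fun x => C + D * Real.exp (-Φ x)))
        (D * ((2 * p * Real.exp (-Φ ξ) + r) *
          (p * Real.exp (-Φ ξ) ^ 2 + r * Real.exp (-Φ ξ) + q))) ξ := by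
    intro C D ξ hξ
    refine ((hE2 ξ hξ).const_mul D).congr_of_eventuallyEq ?_
    filter_upwards [isOpen_Ioo.mem_nhds hξ] with x hx
    exact (key C D x hx).deriv
  intro ξ hξ
  have u1 := key A₀ A₁ ξ hξ
  have u2 := key2 A₀ A₁ ξ hξ
  have v1 := key B₀ B₁ ξ hξ
  have v2 := key2 B₀ B₁ ξ hξ
  rw [← hu] at u1 u2
  rw [← hv] at v1 v2
  have uv := (u1.mul v1).deriv
  have uv' : deriv (fun ξ' => u ξ' * v ξ') ξ = _ := uv
  refine ⟨⟨u1.differentiableAt, u2.differentiableAt, v1.differentiableAt,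
    v2.differentiableAt⟩, ?_, ?_⟩
  · rw [uv', u1.deriv, u2.deriv, hu, hv]
    simp only []
    generalize Real.exp (-Φ ξ) = E
    linear_combination (-(p * E ^ 2 + r * E + q)) * (2 * E * A₁ * k1 + A₁ * k4 + L * k3)
  · rw [uv', v1.deriv, v2.deriv, hu, hv]
    simp only []
    generalize Real.exp (-Φ ξ) = E
    linear_combination (-(p * E ^ 2 + r * E + q)) * (2 * E * B₁ * k2 + B₁ * k5 - M * k3)
end

section
/- Let p, q, r, k be real numbers. Suppose Φ is a differentiable real-valued function on an open interval I satisfying the auxiliary ODE Φ'(ξ) = p·exp(−Φ(ξ)) + q·exp(Φ(ξ)) + r for all ξ ∈ I. Define w(ξ) = −6k²pq − 6k²pr·exp(−Φ(ξ)) − 6k²p²·exp(−2Φ(ξ)) and c = k⁴(−8pqr² + r⁴ + 16p²q²). Then w is four times differentiable on I and −c·w(ξ) + (5/3)·w(ξ)³ + 5k²·w(ξ)·w''(ξ) + k⁴·w''''(ξ) = 0 for all ξ ∈ I. -/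
open Polynomial in
/-- Derivative of a polynomial expression in a solution of a Riccati equation. -/
lemma poly_step (p q r a b : ℝ) (E g : ℝ → ℝ) (P : Polynomial ℝ)
    (hE : ∀ x ∈ Set.Ioo a b, HasDerivAt E (-(p * E x ^ 2 + r * E x + q)) x)
    (hg : ∀ x ∈ Set.Ioo a b, g x = P.eval (E x)) :
    ∀ x ∈ Set.Ioo a b, DifferentiableAt ℝ g x ∧
      deriv g x = (derivative P * (-(C p * X ^ 2 + C r * X + C q))).eval (E x) := by
  intro x hx
  have h1 : HasDerivAt (fun y => P.eval (E y))
      ((derivative P).eval (E x) * (-(p * E x ^ 2 + r * E x + q))) x :=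
    (P.hasDerivAt (E x)).comp x (hE x hx)
  have h2 : g =ᶠ[nhds x] fun y => P.eval (E y) :=
    Filter.eventually_of_mem (isOpen_Ioo.mem_nhds hx) hg
  have h3 := h1.congr_of_eventuallyEq h2
  refine ⟨h3.differentiableAt, ?_⟩
  rw [h3.deriv]
  simp

/-- The ansatz w = -6k²pq - 6k²pr·exp(-Φ) - 6k²p²·exp(-2Φ) with wave speed
c = k⁴(-8pqr² + r⁴ + 16p²q²) solves the once-integrated traveling-wave
Sawada–Kotera equation -c·w + (5/3)w³ + 5k²·w·w'' + k⁴·w'''' = 0,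
provided Φ solves the auxiliary ODE. -/
theorem stmt_12 (p q r k a b : ℝ) (Φ : ℝ → ℝ)
    (hΦ : ∀ ξ ∈ Set.Ioo a b,
      HasDerivAt Φ (p * Real.exp (-Φ ξ) + q * Real.exp (Φ ξ) + r) ξ)
    (w : ℝ → ℝ)
    (hw : w = fun ξ => -(6 * k ^ 2 * p * q) - 6 * k ^ 2 * p * r * Real.exp (-Φ ξ)
      - 6 * k ^ 2 * p ^ 2 * Real.exp (-(2 * Φ ξ)))
    (c : ℝ)
    (hc : c = k ^ 4 * (-(8 * p * q * r ^ 2) + r ^ 4 + 16 * p ^ 2 * q ^ 2)) :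
    ∀ ξ ∈ Set.Ioo a b,
      (DifferentiableAt ℝ w ξ ∧ DifferentiableAt ℝ (deriv w) ξ ∧
       DifferentiableAt ℝ (deriv (deriv w)) ξ ∧
       DifferentiableAt ℝ (deriv (deriv (deriv w))) ξ) ∧
      -(c * w ξ) + 5 / 3 * w ξ ^ 3 + 5 * k ^ 2 * w ξ * deriv (deriv w) ξ
        + k ^ 4 * deriv (deriv (deriv (deriv w))) ξ = 0 := by
  intro ξ hξ
  have hE : ∀ x ∈ Set.Ioo a b, HasDerivAt (fun y => Real.exp (-Φ y))
      (-(p * Real.exp (-Φ x) ^ 2 + r * Real.exp (-Φ x) + q)) x := by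
    intro x hx
    have hone : Real.exp (-Φ x) * Real.exp (Φ x) = 1 := by
      rw [← Real.exp_add, neg_add_cancel, Real.exp_zero]
    have h : HasDerivAt (fun y => Real.exp (-Φ y))
      (Real.exp (-Φ x) * -(p * Real.exp (-Φ x) + q * Real.exp (Φ x) + r)) x :=
      (hΦ x hx).neg.exp
    refine h.congr_deriv ?_
    linear_combination (-q) * hone
  have h0 : ∀ x ∈ Set.Ioo a b, w x = (Polynomial.C (-(6 * k ^ 2 * p * q))
      - Polynomial.C (6 * k ^ 2 * p * r) * Polynomial.X
      - Polynomial.C (6 * k ^ 2 * p ^ 2) * Polynomial.X ^ 2).eval (Real.exp (-Φ x)) := by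
    intro x _
    have : Real.exp (-(2 * Φ x)) = Real.exp (-Φ x) ^ 2 := by
      rw [← Real.exp_nat_mul]; congr 1; push_cast; ring
    rw [hw]
    simp [this]
  have h1 := poly_step p q r a b _ w _ hE h0
  have h2 := poly_step p q r a b _ _ _ hE (fun x hx => (h1 x hx).2)
  have h3 := poly_step p q r a b _ _ _ hE (fun x hx => (h2 x hx).2)
  have h4 := poly_step p q r a b _ _ _ hE (fun x hx => (h3 x hx).2)
  refine ⟨⟨(h1 ξ hξ).1, (h2 ξ hξ).1, (h3 ξ hξ).1, (h4 ξ hξ).1⟩, ?_⟩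
  rw [(h4 ξ hξ).2, (h2 ξ hξ).2, h0 ξ hξ, hc]
  generalize Real.exp (-Φ ξ) = e
  simp only [Polynomial.derivative_mul, Polynomial.derivative_add, Polynomial.derivative_sub,
    Polynomial.derivative_neg, Polynomial.derivative_C, Polynomial.derivative_X,
    Polynomial.derivative_X_pow,
    Polynomial.eval_mul, Polynomial.eval_add, Polynomial.eval_sub, Polynomial.eval_neg,
    Polynomial.eval_C, Polynomial.eval_X, Polynomial.eval_pow,
    zero_mul, mul_zero, zero_add, add_zero, zero_sub, mul_one,
    neg_zero, Nat.cast_ofNat, Nat.add_one_sub_one, pow_one]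
  ring
end

section
/- Let b, ξ₀ be real numbers. Then the function V : ℝ × ℝ → ℝ defined by V(x,t) = b·tanh(b·x + b³·t + ξ₀) is smooth and satisfies the foam drainage equation ∂V/∂t = (1/2)·V·∂²V/∂x² + 2V²·∂V/∂x + (∂V/∂x)² at every point (x,t) ∈ ℝ × ℝ. -/
theorem tanh_hasDeriv_aux (y : ℝ) : HasDerivAt Real.tanh (1 - Real.tanh y ^ 2) y := by
  have h0 : Real.cosh y ≠ 0 := (Real.cosh_pos y).ne'
  have h := (Real.hasDerivAt_sinh y).div (Real.hasDerivAt_cosh y) h0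
  have e : Real.tanh = Real.sinh / Real.cosh := by
    funext z
    simp [Real.tanh_eq_sinh_div_cosh]
  have e2 : 1 - Real.tanh y ^ 2 =
      (Real.cosh y * Real.cosh y - Real.sinh y * Real.sinh y) / Real.cosh y ^ 2 := by
    rw [Real.tanh_eq_sinh_div_cosh]
    field_simp
  rw [e2, e]
  exact h

/-- V(x,t) = b·tanh(b·x + b³·t + ξ₀) is a smooth exact solution of
the foam drainage equation Vₜ = (1/2)V·Vₓₓ + 2V²·Vₓ + Vₓ². -/
theorem stmt_15 (b ξ₀ : ℝ) (V : ℝ → ℝ → ℝ)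
    (hV : V = fun x t => b * Real.tanh (b * x + b ^ 3 * t + ξ₀)) :
    ContDiff ℝ (⊤ : ℕ∞) (fun X : ℝ × ℝ => V X.1 X.2) ∧
    ∀ x t : ℝ,
      deriv (fun t' => V x t') t =
        1 / 2 * V x t * deriv (deriv (fun x' => V x' t)) x
          + 2 * V x t ^ 2 * deriv (fun x' => V x' t) x
          + deriv (fun x' => V x' t) x ^ 2 := by
  subst hV
  constructor
  · simp only [Real.tanh_eq_sinh_div_cosh]
    have hl : ContDiff ℝ (⊤ : ℕ∞) (fun X : ℝ × ℝ => b * X.1 + b ^ 3 * X.2 + ξ₀) := by fun_prop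
    exact contDiff_const.mul
      ((Real.contDiff_sinh.comp hl).div (Real.contDiff_cosh.comp hl)
        (fun X => (Real.cosh_pos _).ne'))
  · intro x t
    have hx : ∀ y : ℝ, HasDerivAt (fun x' => b * x' + b ^ 3 * t + ξ₀) b y := fun y => by
      simpa using (((hasDerivAt_id y).const_mul b).add_const (b ^ 3 * t)).add_const ξ₀
    have ht : HasDerivAt (fun t' => b * x + b ^ 3 * t' + ξ₀) (b ^ 3) t := by
      simpa using (((hasDerivAt_id t).const_mul (b ^ 3)).const_add (b * x)).add_const ξ₀
    have hT : ∀ y : ℝ, HasDerivAt (fun x' => Real.tanh (b * x' + b ^ 3 * t + ξ₀))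
        ((1 - Real.tanh (b * y + b ^ 3 * t + ξ₀) ^ 2) * b) y := fun y =>
      (tanh_hasDeriv_aux _).comp y (hx y)
    have h1 : deriv (fun x' => b * Real.tanh (b * x' + b ^ 3 * t + ξ₀)) =
        fun y => b * ((1 - Real.tanh (b * y + b ^ 3 * t + ξ₀) ^ 2) * b) :=
      funext fun y => ((hT y).const_mul b).deriv
    have h2 := (((((hT x).pow 2).const_sub 1).mul_const b).const_mul b).deriv
    have h3 : deriv (fun t' => b * Real.tanh (b * x + b ^ 3 * t' + ξ₀)) t = _ :=
      (((tanh_hasDeriv_aux _).comp t ht).const_mul b).deriv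
    simp only [Pi.pow_apply] at h2
    simp only [h1]
    rw [h2, h3]
    push_cast
    ring
end

section
/- Let b, ξ₀ be real numbers. Then at every point (x,t) ∈ ℝ × ℝ with sinh(b·x + b³·t + ξ₀) ≠ 0, the function V(x,t) = b·coth(b·x + b³·t + ξ₀) satisfies the foam drainage equation ∂V/∂t = (1/2)·V·∂²V/∂x² + 2V²·∂V/∂x + (∂V/∂x)². -/
lemma aux_coth (θ : ℝ) (h : Real.sinh θ ≠ 0) :
    HasDerivAt (fun y => Real.cosh y / Real.sinh y) (-1 / Real.sinh θ ^ 2) θ := by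
  have := (Real.hasDerivAt_cosh θ).div (Real.hasDerivAt_sinh θ) h
  refine this.congr_deriv ?_
  congr 1
  linarith [Real.cosh_sq θ, sq (Real.sinh θ), sq (Real.cosh θ)]

lemma aux_csch (θ : ℝ) (h : Real.sinh θ ≠ 0) :
    HasDerivAt (fun y => -1 / Real.sinh y ^ 2) (2 * Real.cosh θ / Real.sinh θ ^ 3) θ := by
  have := (hasDerivAt_const θ (-1 : ℝ)).div ((Real.hasDerivAt_sinh θ).pow 2) (pow_ne_zero 2 h)
  refine this.congr_deriv ?_
  simp only [Pi.pow_apply]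
  field_simp
  norm_num
  ring

/-- V(x,t) = b·coth(b·x + b³·t + ξ₀), where coth θ = cosh θ / sinh θ,
satisfies the foam drainage equation Vₜ = (1/2)V·Vₓₓ + 2V²·Vₓ + Vₓ²
wherever sinh(b·x + b³·t + ξ₀) ≠ 0. -/
theorem stmt_16 (b ξ₀ : ℝ) (V : ℝ → ℝ → ℝ)
    (hV : V = fun x t => b *
      (Real.cosh (b * x + b ^ 3 * t + ξ₀) / Real.sinh (b * x + b ^ 3 * t + ξ₀))) :
    ∀ x t : ℝ, Real.sinh (b * x + b ^ 3 * t + ξ₀) ≠ 0 →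
      deriv (fun t' => V x t') t =
        1 / 2 * V x t * deriv (deriv (fun x' => V x' t)) x
          + 2 * V x t ^ 2 * deriv (fun x' => V x' t) x
          + deriv (fun x' => V x' t) x ^ 2 := by
  intro x t h
  subst hV
  have lx : ∀ y, HasDerivAt (fun y => b * y + b ^ 3 * t + ξ₀) b y := fun y => by
    simpa using ((((hasDerivAt_id y).const_mul b).add_const (b ^ 3 * t)).add_const ξ₀)
  have lt : HasDerivAt (fun s => b * x + b ^ 3 * s + ξ₀) (b ^ 3) t := by
    simpa using ((((hasDerivAt_id t).const_mul (b ^ 3)).const_add (b * x)).add_const ξ₀)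
  have dt := (((aux_coth _ h).comp t lt).const_mul b).deriv
  have dx : ∀ y, Real.sinh (b * y + b ^ 3 * t + ξ₀) ≠ 0 → _ := fun y hy =>
    (((aux_coth _ hy).comp y (lx y)).const_mul b).deriv
  have dxx := ((((aux_csch _ h).comp x (lx x)).mul_const b).const_mul b).deriv
  have ev : ∀ᶠ y in nhds x, Real.sinh (b * y + b ^ 3 * t + ξ₀) ≠ 0 := by
    have hc : Continuous fun y => Real.sinh (b * y + b ^ 3 * t + ξ₀) :=
      Real.continuous_sinh.comp (by fun_prop)
    exact hc.continuousAt.eventually_ne h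
  have e2 := Filter.EventuallyEq.deriv_eq (ev.mono dx)
  have d1 := dx x h
  simp only [Function.comp_def] at dt d1 dxx e2
  rw [dxx] at e2
  simp only []
  rw [dt, d1, e2]
  have hc := Real.cosh_sq (b * x + b ^ 3 * t + ξ₀)
  generalize Real.cosh (b * x + b ^ 3 * t + ξ₀) = c at *
  generalize Real.sinh (b * x + b ^ 3 * t + ξ₀) = s at *
  field_simp
  rw [hc]
  ring
end

section
/- Let b, ξ₀ be real numbers. Then at every point (x,t) ∈ ℝ × ℝ with cos(b·x − b³·t + ξ₀) ≠ 0, the function V(x,t) = −b·tan(b·x − b³·t + ξ₀) satisfies the foam drainage equation ∂V/∂t = (1/2)·V·∂²V/∂x² + 2V²·∂V/∂x + (∂V/∂x)². -/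
/-- V(x,t) = -b·tan(b·x - b³·t + ξ₀) satisfies the foam drainage equation
Vₜ = (1/2)V·Vₓₓ + 2V²·Vₓ + Vₓ² wherever cos(b·x - b³·t + ξ₀) ≠ 0. -/
theorem stmt_17 (b ξ₀ : ℝ) (V : ℝ → ℝ → ℝ)
    (hV : V = fun x t => -(b * Real.tan (b * x - b ^ 3 * t + ξ₀))) :
    ∀ x t : ℝ, Real.cos (b * x - b ^ 3 * t + ξ₀) ≠ 0 →
      deriv (fun t' => V x t') t =
        1 / 2 * V x t * deriv (deriv (fun x' => V x' t)) x
          + 2 * V x t ^ 2 * deriv (fun x' => V x' t) x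
          + deriv (fun x' => V x' t) x ^ 2 := by
  intro x t hc
  subst hV
  have hlx : ∀ y : ℝ, HasDerivAt (fun y : ℝ => b * y - b ^ 3 * t + ξ₀) b y := fun y => by
    simpa using (((hasDerivAt_id y).const_mul b).sub_const (b ^ 3 * t)).add_const ξ₀
  have hlt : HasDerivAt (fun s : ℝ => b * x - b ^ 3 * s + ξ₀) (-b ^ 3) t := by
    simpa using (((hasDerivAt_id t).const_mul (b ^ 3)).const_sub (b * x)).add_const ξ₀
  have hx : ∀ y : ℝ, Real.cos (b * y - b ^ 3 * t + ξ₀) ≠ 0 →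
      HasDerivAt (fun y : ℝ => -(b * Real.tan (b * y - b ^ 3 * t + ξ₀)))
        (-(b * (1 / Real.cos (b * y - b ^ 3 * t + ξ₀) ^ 2 * b))) y := by
    intro y hy
    have h := (((Real.hasDerivAt_tan hy).comp y (hlx y)).const_mul b).neg
    exact h
  have ht : HasDerivAt (fun s : ℝ => -(b * Real.tan (b * x - b ^ 3 * s + ξ₀)))
      (-(b * (1 / Real.cos (b * x - b ^ 3 * t + ξ₀) ^ 2 * (-b ^ 3)))) t := by
    have h := (((Real.hasDerivAt_tan hc).comp t hlt).const_mul b).neg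
    exact h
  have hev : deriv (fun y : ℝ => -(b * Real.tan (b * y - b ^ 3 * t + ξ₀))) =ᶠ[nhds x]
      fun y => -b ^ 2 * (Real.cos (b * y - b ^ 3 * t + ξ₀) ^ 2)⁻¹ := by
    have hcont : ContinuousAt (fun y : ℝ => Real.cos (b * y - b ^ 3 * t + ξ₀)) x := by fun_prop
    filter_upwards [hcont.eventually_ne hc] with y hy
    rw [(hx y hy).deriv]
    ring
  have hxx := ((((hlx x).cos).pow 2).inv (pow_ne_zero 2 hc)).const_mul (-b ^ 2)
  have hxx' := (hxx.congr_of_eventuallyEq hev).deriv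
  simp only
  rw [hxx', (hx x hc).deriv, ht.deriv, Real.tan_eq_sin_div_cos]
  have hs := Real.sin_sq_add_cos_sq (b * x - b ^ 3 * t + ξ₀)
  simp only [Pi.pow_apply]
  generalize Real.cos (b * x - b ^ 3 * t + ξ₀) = c at *
  generalize Real.sin (b * x - b ^ 3 * t + ξ₀) = s at *
  have hs' : s ^ 2 = 1 - c ^ 2 := by linarith
  field_simp
  norm_num
  ring_nf
  simp only [hs']
  ring
end

section
/- Let b, ξ₀ be real numbers. Then the function U : ℝ × ℝ → ℝ defined by U(x,t) = 6b²·sech²(b·x − 16b⁵·t + ξ₀) (where sech(θ) = 1/cosh(θ)) is smooth and satisfies the fifth-order Sawada–Kotera equation ∂U/∂t + 5U²·∂U/∂x + 5·∂U/∂x·∂²U/∂x² + 5U·∂³U/∂x³ + ∂⁵U/∂x⁵ = 0 at every point (x,t) ∈ ℝ × ℝ. -/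
lemma aux_sech (y : ℝ) :
    (1 / Real.cosh y) ^ 2 = 1 - (Real.sinh y / Real.cosh y) ^ 2 := by
  have h := (Real.cosh_pos y).ne'
  have h2 := Real.cosh_sq y
  field_simp
  linarith

lemma aux_tanh (f : ℝ → ℝ) (c x : ℝ) (hf : HasDerivAt f c x) :
    HasDerivAt (fun x => Real.sinh (f x) / Real.cosh (f x))
      (c * (1 - (Real.sinh (f x) / Real.cosh (f x)) ^ 2)) x := by
  have h := (Real.cosh_pos (f x)).ne'
  refine HasDerivAt.congr_deriv ((hf.sinh).div (hf.cosh) h) ?_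
  field_simp

lemma aux_iter (T : ℝ → ℝ) (b : ℝ) (hT : ∀ x, HasDerivAt T (b * (1 - T x ^ 2)) x) :
    let V : ℝ → ℝ := fun x => 6 * b ^ 2 * (1 - T x ^ 2)
    iteratedDeriv 1 V = (fun x => -12 * b ^ 3 * (T x - T x ^ 3)) ∧
    iteratedDeriv 2 V = (fun x => -12 * b ^ 4 * (1 - 4 * T x ^ 2 + 3 * T x ^ 4)) ∧
    iteratedDeriv 3 V = (fun x => -12 * b ^ 5 * (-8 * T x + 20 * T x ^ 3 - 12 * T x ^ 5)) ∧
    iteratedDeriv 5 V = (fun x => -12 * b ^ 7 *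
      ((1 - T x ^ 2) * (136 * T x - 480 * T x ^ 3 + 360 * T x ^ 5))) := by
  intro V
  have h1 : iteratedDeriv 1 V = (fun x => -12 * b ^ 3 * (T x - T x ^ 3)) := by
    rw [iteratedDeriv_one]
    funext x
    refine HasDerivAt.deriv ?_
    refine HasDerivAt.congr_deriv ((((hT x).pow 2).const_sub 1).const_mul (6 * b ^ 2)) ?_
    push_cast
    ring
  have h2 : iteratedDeriv 2 V =
      (fun x => -12 * b ^ 4 * (1 - 4 * T x ^ 2 + 3 * T x ^ 4)) := by
    rw [iteratedDeriv_succ, h1]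
    funext x
    refine HasDerivAt.deriv ?_
    refine HasDerivAt.congr_deriv (((hT x).sub ((hT x).pow 3)).const_mul (-12 * b ^ 3)) ?_
    push_cast
    ring
  have h3 : iteratedDeriv 3 V =
      (fun x => -12 * b ^ 5 * (-8 * T x + 20 * T x ^ 3 - 12 * T x ^ 5)) := by
    rw [iteratedDeriv_succ, h2]
    funext x
    refine HasDerivAt.deriv ?_
    refine HasDerivAt.congr_deriv ((((((hT x).pow 2).const_mul 4).const_sub 1).add
      (((hT x).pow 4).const_mul 3)).const_mul (-12 * b ^ 4)) ?_
    push_cast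
    ring
  have h4 : iteratedDeriv 4 V = (fun x => -12 * b ^ 6 *
      (-8 + 68 * T x ^ 2 - 120 * T x ^ 4 + 60 * T x ^ 6)) := by
    rw [iteratedDeriv_succ, h3]
    funext x
    refine HasDerivAt.deriv ?_
    refine HasDerivAt.congr_deriv (((((hT x).const_mul (-8)).add (((hT x).pow 3).const_mul 20)).sub
      (((hT x).pow 5).const_mul 12)).const_mul (-12 * b ^ 5)) ?_
    push_cast
    ring
  refine ⟨h1, h2, h3, ?_⟩
  rw [iteratedDeriv_succ, h4]
  funext x
  refine HasDerivAt.deriv ?_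
  refine HasDerivAt.congr_deriv ((((((((hT x).pow 2).const_mul 68).const_add (-8)).sub
    (((hT x).pow 4).const_mul 120))).add
      (((hT x).pow 6).const_mul 60)).const_mul (-12 * b ^ 6)) ?_
  push_cast
  ring


/-- The soliton U(x,t) = 6b²·sech²(b·x - 16b⁵·t + ξ₀), where sech θ = 1/cosh θ,
is a smooth exact solution of the fifth-order Sawada–Kotera equation
Uₜ + 5U²·Uₓ + 5·Uₓ·Uₓₓ + 5U·Uₓₓₓ + Uₓₓₓₓₓ = 0. -/
theorem stmt_18 (b ξ₀ : ℝ) (U : ℝ → ℝ → ℝ)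
    (hU : U = fun x t => 6 * b ^ 2 *
      (1 / Real.cosh (b * x - 16 * b ^ 5 * t + ξ₀)) ^ 2) :
    ContDiff ℝ (⊤ : ℕ∞) (fun X : ℝ × ℝ => U X.1 X.2) ∧
    ∀ x t : ℝ,
      deriv (fun t' => U x t') t
        + 5 * U x t ^ 2 * iteratedDeriv 1 (fun x' => U x' t) x
        + 5 * iteratedDeriv 1 (fun x' => U x' t) x * iteratedDeriv 2 (fun x' => U x' t) x
        + 5 * U x t * iteratedDeriv 3 (fun x' => U x' t) x
        + iteratedDeriv 5 (fun x' => U x' t) x = 0 := by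
  subst hU
  constructor
  · have : ∀ X : ℝ × ℝ, Real.cosh (b * X.1 - 16 * b ^ 5 * X.2 + ξ₀) ≠ 0 :=
      fun X => (Real.cosh_pos _).ne'
    refine contDiff_const.mul (ContDiff.pow (contDiff_const.div ?_ this) 2)
    exact Real.contDiff_cosh.comp (by fun_prop)
  · intro x t
    simp only [aux_sech]
    have hx : ∀ y, HasDerivAt (fun y => b * y - 16 * b ^ 5 * t + ξ₀) b y := fun y => by
      simpa using (((hasDerivAt_id y).const_mul b).sub_const (16 * b ^ 5 * t)).add_const ξ₀
    have ht : HasDerivAt (fun s => b * x - 16 * b ^ 5 * s + ξ₀) (-(16 * b ^ 5)) t := by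
      simpa using (((hasDerivAt_id t).const_mul (16 * b ^ 5)).const_sub (b * x)).add_const ξ₀
    obtain ⟨h1, h2, h3, h5⟩ := aux_iter _ b (fun y => aux_tanh _ b y (hx y))
    rw [h1, h2, h3, h5]
    have hd := ((((aux_tanh _ _ t ht).pow 2).const_sub 1).const_mul (6 * b ^ 2)).deriv
    simp only [Pi.pow_apply] at hd
    rw [hd]
    push_cast
    ring
end
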